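/- Let q be a prime power and let x_1,…,x_n be positive reals with x_1+⋯+x_n = 1. Then the q-Tsetlin library operator T_{G/B}(q,x) on ℂ[G/B] has a unique stationary distribution Ψ(q,x); Ψ(q,x)_F = Ψ(q,x)_{F'} whenever the cosets F and F' lie in the same double coset [π]; for π ∈ S_n and F_π the coset of the permutation matrix of π, Ψ(q,x)_{F_π} = ∏_{k=1}^n f(π_1,…,π_k) / (1 − ∑_{s∈{π_1,…,π_{k−1}}} x_s/q^{n−s−b_k(s)}), where f(π_1,…,π_k) = ∑_{s∈{π_1,…,π_k}, s≤π_k} (x_s/q^{n−s−b_k(s)})·(q−1)^{χ(s<π_k)}, b_k(s) = #{t ∈ {π_1,…,π_{k−1}} : t > s}, and χ(s<π_k) = 1 if s < π_k and 0 otherwise; and ∑_{F ∈ G/B} Ψ(q,x)_F = 1. -/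

import Mathlib

open scoped Classical
set_option synthInstance.maxHeartbeats 1000000
set_option maxHeartbeats 1000000

noncomputable section

namespace QTsetlin

/-- `M` is upper triangular. -/
def upperTri {F : Type} [Field F] {n : ℕ} (M : Matrix (Fin n) (Fin n) F) : Prop :=
  ∀ i j : Fin n, j < i → M i j = 0

/-- `M` is lower triangular. -/
def lowerTri {F : Type} [Field F] {n : ℕ} (M : Matrix (Fin n) (Fin n) F) : Prop :=
  ∀ i j : Fin n, i < j → M i j = 0

variable (F : Type) [Field F] [Fintype F] [DecidableEq F] (n : ℕ)

/-- The general linear group `G = GL_n(F_q)`. -/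
abbrev GLn := GL (Fin n) F

/-- The Borel subgroup `B` of invertible upper triangular matrices. -/
def Bsub : Subgroup (GLn F n) where
  carrier := {g | upperTri (g : Matrix (Fin n) (Fin n) F)}
  one_mem' := by
    intro i j hij
    simp [Matrix.one_apply, (Fin.ne_of_lt hij).symm]
  mul_mem' := by
    intro a b ha hb i j hij
    exact Matrix.BlockTriangular.mul ha hb hij
  inv_mem' := by
    intro a ha
    have hdet : IsUnit ((a : Matrix (Fin n) (Fin n) F).det) :=
      (Matrix.isUnit_iff_isUnit_det _).mp a.isUnit
    have hinv : Invertible (a : Matrix (Fin n) (Fin n) F) :=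
      Matrix.invertibleOfIsUnitDet _ hdet
    have h2 : ((a : Matrix (Fin n) (Fin n) F)⁻¹).BlockTriangular (id : Fin n → Fin n) :=
      Matrix.blockTriangular_inv_of_blockTriangular ha
    show upperTri ((a⁻¹ : GLn F n) : Matrix (Fin n) (Fin n) F)
    rw [show ((a⁻¹ : GLn F n) : Matrix (Fin n) (Fin n) F)
        = (a : Matrix (Fin n) (Fin n) F)⁻¹ from Matrix.coe_units_inv a]
    exact h2

/-- The set of cosets `G/B`. -/
abbrev Cosets := GLn F n ⧸ Bsub F n

/-- permutation matrix of `π`: entry 1 in positions `(π j, j)`. -/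
def permMat (π : Equiv.Perm (Fin n)) : Matrix (Fin n) (Fin n) F :=
  fun i j => if π j = i then 1 else 0

lemma permMat_mul (π σ : Equiv.Perm (Fin n)) :
    permMat F n π * permMat F n σ = permMat F n (π * σ) := by
  ext i j
  rw [Matrix.mul_apply]
  simp only [permMat, mul_ite, ite_mul, one_mul, mul_one, mul_zero, zero_mul]
  rw [Finset.sum_eq_single (σ j)]
  · simp [Equiv.Perm.mul_apply]
    congr
  · intro k _ hk
    simp [hk.symm]
  · simp

lemma permMat_one : permMat F n 1 = 1 := by
  ext i j
  simp [permMat, Matrix.one_apply, eq_comm]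

/-- The permutation matrix of `π`, as an element of `GL_n(F)`. -/
def permGL (π : Equiv.Perm (Fin n)) : GLn F n :=
  ⟨permMat F n π, permMat F n π⁻¹,
    by rw [permMat_mul, mul_inv_cancel, permMat_one],
    by rw [permMat_mul, inv_mul_cancel, permMat_one]⟩

/-- `f_i(t)`: identity matrix with an extra entry `t` in position `(r, c)`, as an
element of `GL_n(F)`. -/
def transvGL (r c : Fin n) (h : r ≠ c) (t : F) : GLn F n :=
  ⟨Matrix.transvection r c t, Matrix.transvection r c (-t),
    by rw [Matrix.transvection_mul_transvection_same _ _ h, add_neg_cancel,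
      Matrix.transvection_zero],
    by rw [Matrix.transvection_mul_transvection_same _ _ h, neg_add_cancel,
      Matrix.transvection_zero]⟩

variable (K : Type) [Field K]

/-- Matrix (row convention: row `gB` is `(gB) · T_{k+1}`) of the Hecke generator `T_{k+1}`
(paper indexing) on `ℂ[G/B]`:
`(gB)·T_i = g s_i B + ∑_{t ≠ 0} g f_i(t) B`, where `s_i` swaps (0-based) positions `k, k+1`
and `f_i(t)` has an extra entry `t` in (0-based) position `(k+1, k)`. -/
def genGB (k : ℕ) : Matrix (Cosets F n) (Cosets F n) K := fun C D =>
  if h : k + 1 < n then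
    (if (QuotientGroup.mk (C.out * permGL F n
          (Equiv.swap ⟨k, Nat.lt_of_succ_lt h⟩ ⟨k + 1, h⟩)) : Cosets F n) = D then 1 else 0)
    + ((Finset.univ.filter fun t : F => t ≠ 0 ∧
        (QuotientGroup.mk (C.out * transvGL F n ⟨k + 1, h⟩ ⟨k, Nat.lt_of_succ_lt h⟩
          (fun hc => by simp [Fin.ext_iff] at hc) t) : Cosets F n) = D).card : K)
  else 0

/-- Matrix of the product `T_k T_{k-1} ⋯ T_1` (paper indexing) on `ℂ[G/B]`. -/
def prodGenGB : ℕ → Matrix (Cosets F n) (Cosets F n) K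
  | 0 => 1
  | k + 1 => genGB F n K k * prodGenGB k

/-- The (0-based) row index of the leading entry (the pivot `1` of the distinguished coset
representative) in the first column of a representative of the coset `C`. -/
def pivotRow (C : Cosets F n) : ℕ :=
  sInf {i : ℕ | ∃ h : i < n,
    ((C.out : GLn F n) : Matrix (Fin n) (Fin n) F) ⟨i, h⟩
      ⟨0, Nat.lt_of_le_of_lt (Nat.zero_le i) h⟩ ≠ 0}

/-- Matrix of the weighting operator `X_{G/B}(q,x)`, where `q` is the cardinality of the
field: `gB ↦ (x_i / q^{n-i}) gB` with `i` the row index of the leading 1 in the first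
column of the distinguished representative of `gB`. -/
def XGB (x : Fin n → K) : Matrix (Cosets F n) (Cosets F n) K := fun C D =>
  if D = C then
    (if h : pivotRow F n C < n then
      x ⟨pivotRow F n C, h⟩ / (Fintype.card F : K) ^ (n - 1 - pivotRow F n C)
    else 0)
  else 0

/-- Matrix of the q-Tsetlin library operator
`T_{G/B}(q,x) = (∑_{i=1}^n T_{i-1} ⋯ T_1) ∘ X_{G/B}(q,x)` on `ℂ[G/B]` (row convention). -/
def TGB (x : Fin n → K) : Matrix (Cosets F n) (Cosets F n) K :=
  (∑ k ∈ Finset.range n, prodGenGB F n K k) * XGB F n K x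

/-- The coset `gB` belongs to the double coset `[π] = B⁻ π B`. -/
def inDC (π : Equiv.Perm (Fin n)) (C : Cosets F n) : Prop :=
  ∃ l b : GLn F n, lowerTri (l : Matrix (Fin n) (Fin n) F) ∧
    upperTri (b : Matrix (Fin n) (Fin n) F) ∧
    C = QuotientGroup.mk (l * permGL F n π * b)

/-- `b_k(s) = #{t ∈ {π_1,…,π_{k-1}} : t > s}` — here `k` is a 0-based position (so the
positions strictly before `k` are the paper's `1,…,k-1`) and `s` a 0-based value. -/
def bCount {n : ℕ} (π : Equiv.Perm (Fin n)) (k : Fin n) (s : Fin n) : ℕ :=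
  (Finset.univ.filter fun j : Fin n => j < k ∧ s < π j).card

/-- `f(π_1, …, π_k) = ∑_{s ∈ {π_1,…,π_k}, s ≤ π_k} (x_s / q^{n-s-b_k(s)}) (q-1)^{χ(s<π_k)}`,
the sum being over positions `j ≤ k` with `π_j ≤ π_k` (values are 0-based, so the paper's
value `s` is `(π j : ℕ) + 1`). -/
def fGB (n : ℕ) (q : ℝ) (x : Fin n → ℝ) (π : Equiv.Perm (Fin n)) (k : Fin n) : ℝ :=
  ∑ j ∈ Finset.univ.filter fun j : Fin n => j ≤ k ∧ π j ≤ π k,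
    x (π j) / q ^ ((n : ℤ) - ((π j : ℕ) + 1) - bCount π k (π j))
      * (q - 1) ^ (if π j < π k then 1 else 0)

/-- The stationary distribution formula for the q-Tsetlin library on flags, evaluated at
the distinguished coset `F_π`:
`Ψ_{F_π} = ∏_{k=1}^n f(π_1,…,π_k) / (1 - ∑_{s ∈ {π_1,…,π_{k-1}}} x_s / q^{n-s-b_k(s)})`. -/
def psiGB (n : ℕ) (q : ℝ) (x : Fin n → ℝ) (π : Equiv.Perm (Fin n)) : ℝ :=
  ∏ k : Fin n,
    fGB n q x π k /
      (1 - ∑ j ∈ Finset.univ.filter fun j : Fin n => j < k,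
        x (π j) / q ^ ((n : ℤ) - ((π j : ℕ) + 1) - bCount π k (π j)))

/-- `Ψ` is a stationary distribution: a nonnegative row vector with entries summing to `1`
such that `Ψ · T = c Ψ`. -/
def IsStationary {P : Type} [Fintype P] (T : Matrix P P ℝ) (c : ℝ) (Ψ : P → ℝ) : Prop :=
  (∀ p, 0 ≤ Ψ p) ∧ (∑ p, Ψ p = 1) ∧ Matrix.vecMul Ψ T = c • Ψ

end QTsetlin

/-!
The column spans of the initial segments of `g` identify the coset `gB` with a complete flag of
`F ^ n`. There `T_i` sums over the flags which differ from a given one exactly in dimension `i`, and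
`T_{i-1} ⋯ T_1` sums over the lines contained in the member of dimension `i` but not in the
preceding one, moving each of them to the front. Thus `TGB` is the transition matrix of a library
whose books are the lines of `F ^ n`; the weight of a line depends on the pivot of its vectors, and
we spread it evenly over these.

Let `W U` be the total weight of the vectors of `U`, let `Ψ` be stationary and fix a flag `D`. Let
`u k` be the mass which `Ψ` gives to the flags inducing on the quotient by `D k` only images of
members of `D`. After one move this event holds either if it held before and the line moved lies in
`D k`, or if it held for `k + 1` and the line lies in `D (k + 1)` but not in `D k`. Hence
`(1 - W (D k)) * u k = (W (D (k + 1)) - W (D k)) * u (k + 1)`, and going from `u 0 = Ψ D` up to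
`u n = 1` gives `Ψ D` as a product. In particular `Ψ` is unique, and it depends only on the numbers
`W (D k)`. Lower triangular matrices preserve pivots, so these are constant on `B⁻ π B`; for
permutation matrices the `D k` are coordinate subspaces, whose vectors are counted by pivot.
-/

namespace QTsetlin

open Submodule Module
open scoped Matrix Finset

section RowStochastic

variable {P A : Type*} [Fintype P] [DecidableEq P] [CommRing A] [LinearOrder A]
  [IsStrictOrderedRing A] {M : Matrix P P A}

lemma exists_ne_zero_vecMul_eq_self [Nonempty P] (hM : M ∈ Matrix.rowStochastic A P) :
    ∃ Φ : P → A, Φ ≠ 0 ∧ Matrix.vecMul Φ M = Φ := by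
  have hker : ∃ v : P → A, v ≠ 0 ∧ (M - 1).mulVec v = 0 :=
    ⟨1, one_ne_zero, by rw [Matrix.sub_mulVec, hM.2, Matrix.one_mulVec, sub_self]⟩
  obtain ⟨Φ, hΦ, h⟩ :=
    Matrix.exists_vecMul_eq_zero_iff.mpr (Matrix.exists_mulVec_eq_zero_iff.mp hker)
  exact ⟨Φ, hΦ, by rwa [Matrix.vecMul_sub, Matrix.vecMul_one, sub_eq_zero] at h⟩

lemma sum_vecMul_of_mem_rowStochastic (hM : M ∈ Matrix.rowStochastic A P) (Φ : P → A) :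
    ∑ p, Matrix.vecMul Φ M p = ∑ p, Φ p := by
  rw [← dotProduct_one, ← Matrix.dotProduct_mulVec, hM.2, dotProduct_one]

lemma vecMul_abs_eq_self (hM : M ∈ Matrix.rowStochastic A P) {Φ : P → A}
    (hΦ : Matrix.vecMul Φ M = Φ) : Matrix.vecMul |Φ| M = |Φ| := by
  have hle : ∀ p ∈ Finset.univ, |Φ| p ≤ Matrix.vecMul |Φ| M p := fun p _ => by
    calc |Φ| p = |∑ r, Φ r * M r p| := by
          rw [Pi.abs_apply, ← congrFun hΦ p]; rfl
      _ ≤ ∑ r, |Φ r * M r p| := Finset.abs_sum_le_sum_abs _ _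
      _ = Matrix.vecMul |Φ| M p := Finset.sum_congr rfl fun r _ => by
          rw [abs_mul, abs_of_nonneg (hM.1 r p), Pi.abs_apply]
  funext p
  exact ((Finset.sum_eq_sum_iff_of_le hle).mp
    (sum_vecMul_of_mem_rowStochastic hM |Φ|).symm p (Finset.mem_univ p)).symm

end RowStochastic

section Stationary

variable {P Q : Type} [Fintype P] [Fintype Q]

lemma isStationary_submatrix_iff {M : Matrix P P ℝ} {c : ℝ} {Ψ : Q → ℝ} (e : Q ≃ P) :
    IsStationary (M.submatrix e e) c Ψ ↔ IsStationary M c (Ψ ∘ e.symm) := by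
  have hvec : Matrix.vecMul Ψ (M.submatrix e e) = c • Ψ ↔
      Matrix.vecMul (Ψ ∘ e.symm) M = c • (Ψ ∘ e.symm) := by
    rw [Matrix.submatrix_vecMul_equiv, ← Pi.smul_comp,
      ← e.symm.surjective.injective_comp_right.eq_iff]
    simp [Function.comp_assoc]
  simp only [IsStationary, hvec, Function.comp_apply, e.symm.forall_congr_right (q := (0 ≤ Ψ ·)),
    Equiv.sum_comp]

theorem exists_isStationary_of_mem_rowStochastic [DecidableEq P] [Nonempty P] {M : Matrix P P ℝ}
    (hM : M ∈ Matrix.rowStochastic ℝ P) : ∃ Ψ, IsStationary M 1 Ψ := by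
  obtain ⟨Φ, hΦ, hfix⟩ := exists_ne_zero_vecMul_eq_self hM
  have hpos : 0 < ∑ p, |Φ| p := by
    obtain ⟨p, hp⟩ := Function.ne_iff.mp hΦ
    exact Finset.sum_pos' (fun r _ => abs_nonneg (Φ r)) ⟨p, Finset.mem_univ p, abs_pos.mpr hp⟩
  refine ⟨(∑ p, |Φ| p)⁻¹ • |Φ|, fun p => ?_, ?_, ?_⟩
  · exact mul_nonneg (inv_nonneg.mpr hpos.le) (abs_nonneg (Φ p))
  · simp only [Pi.smul_apply, smul_eq_mul, ← Finset.mul_sum, inv_mul_cancel₀ hpos.ne']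
  · rw [Matrix.smul_vecMul, vecMul_abs_eq_self hM hfix, one_smul]

end Stationary

/-- A complete flag in a finite-dimensional vector space `V`, encoded as the sequence of its
members: `C k` is the member of dimension `k`, and `C k = V` for `k` beyond the dimension. -/
@[ext]
structure CompleteFlag (R V : Type*) [DivisionRing R] [AddCommGroup V] [Module R V] where
  toFun : ℕ → Submodule R V
  monotone' : Monotone toFun
  finrank_eq' : ∀ k, finrank R (toFun k) = min k (finrank R V)

namespace CompleteFlag

section Basic

variable {R V : Type*} [DivisionRing R] [AddCommGroup V] [Module R V]

instance : FunLike (CompleteFlag R V) ℕ (Submodule R V) where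
  coe := toFun
  coe_injective _ _ := CompleteFlag.ext

lemma monotone (C : CompleteFlag R V) : Monotone C := C.monotone'

lemma apply_le_apply_succ (C : CompleteFlag R V) (k : ℕ) : C k ≤ C (k + 1) :=
  C.monotone k.le_succ

lemma finrank_apply (C : CompleteFlag R V) (k : ℕ) :
    finrank R (C k) = min k (finrank R V) := C.finrank_eq' k

lemma eq_of_eqOn {C D : CompleteFlag R V} {k : ℕ} (h : Set.EqOn D C {k}ᶜ) (hk : D k = C k) :
    D = C :=
  DFunLike.ext _ _ fun j => if hj : j = k then hj ▸ hk else h hj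

lemma apply_ne_top (C : CompleteFlag R V) {k : ℕ} (hk : k < finrank R V) : C k ≠ ⊤ :=
  fun h => by
    have := C.finrank_apply k
    rw [h, finrank_top] at this
    omega

variable [FiniteDimensional R V]

@[simp]
lemma apply_zero (C : CompleteFlag R V) : C 0 = ⊥ :=
  finrank_eq_zero.mp (by rw [C.finrank_apply, Nat.zero_min])

lemma apply_eq_top (C : CompleteFlag R V) {k : ℕ} (hk : finrank R V ≤ k) : C k = ⊤ :=
  eq_top_of_finrank_eq (by rw [C.finrank_apply, min_eq_right hk])

lemma span_singleton_sup_apply (C : CompleteFlag R V) {v : V} {k : ℕ} (hv : v ∈ C (k + 1))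
    (hv' : v ∉ C k) : span R {v} ⊔ C k = C (k + 1) := by
  refine eq_of_le_of_finrank_le
    (sup_le ((span_singleton_le_iff_mem v _).mpr hv) (C.apply_le_apply_succ k)) ?_
  rw [sup_comm, finrank_sup_span_singleton hv', C.finrank_apply, C.finrank_apply]
  omega

lemma existsUnique_add_smul_mem (C : CompleteFlag R V) {u v : V} {k : ℕ} (hv : v ∈ C (k + 1))
    (hv' : v ∉ C k) (hu : u ∈ C (k + 1)) : ∃! t : R, u + t • v ∈ C k := by
  rw [← C.span_singleton_sup_apply hv hv'] at hu
  obtain ⟨_, hspan, w, hw, rfl⟩ := mem_sup.mp hu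
  obtain ⟨a, rfl⟩ := mem_span_singleton.mp hspan
  refine ⟨-a, by simpa using hw, fun t ht => ?_⟩
  have hmem : (a + t) • v ∈ C k := by
    convert sub_mem ht hw using 1
    rw [add_smul]
    abel
  by_contra hne
  exact hv' ((C k).smul_mem_iff (fun h => hne (eq_neg_of_add_eq_zero_right h)) |>.mp hmem)

lemma eq_apply_of_mem_range (C : CompleteFlag R V) {U : Submodule R V} (hU : U ∈ Set.range C) :
    U = C (finrank R U) := by
  obtain ⟨k, rfl⟩ := hU
  rw [C.finrank_apply]
  obtain hk | hk := le_total k (finrank R V)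
  · rw [min_eq_left hk]
  · rw [min_eq_right hk, C.apply_eq_top hk, C.apply_eq_top le_rfl]

lemma mem_apply_succ_of_span_singleton_sup_mem_range (C : CompleteFlag R V) {v : V} {k : ℕ}
    (h : span R {v} ⊔ C k ∈ Set.range C) : v ∈ C (k + 1) := by
  by_cases hv : v ∈ C k
  · exact C.apply_le_apply_succ k hv
  · have hmem : v ∈ span R {v} ⊔ C k := mem_sup_left (mem_span_singleton_self v)
    rw [C.eq_apply_of_mem_range h, sup_comm, finrank_sup_span_singleton hv, C.finrank_apply] at hmem
    exact C.monotone (by omega) hmem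

lemma eq_of_forall_mem_range {C D : CompleteFlag R V} (h : ∀ k, C k ∈ Set.range D) : C = D := by
  refine DFunLike.ext _ _ fun k => ?_
  rw [D.eq_apply_of_mem_range (h k), C.finrank_apply, ← D.finrank_apply,
    ← D.eq_apply_of_mem_range ⟨k, rfl⟩]

instance [Finite V] : Finite (CompleteFlag R V) :=
  .of_injective (fun C : CompleteFlag R V => Set.range C) fun C D (h : Set.range C = Set.range D) =>
    eq_of_forall_mem_range fun k => h ▸ Set.mem_range_self k

instance [Finite V] : Fintype (CompleteFlag R V) := .ofFinite _

lemma sum_range_ite_mem_apply_succ {A : Type*} [Ring A] (C : CompleteFlag R V) {v : V}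
    (hv : v ≠ 0) :
    ∑ k ∈ Finset.range (finrank R V),
      (if v ∈ C (k + 1) ∧ v ∉ C k then 1 else 0 : A) = 1 := by
  have hsub : ∀ k, (if v ∈ C (k + 1) ∧ v ∉ C k then 1 else 0 : A) =
      (if v ∈ C (k + 1) then 1 else 0) - (if v ∈ C k then 1 else 0) := fun k => by
    have hsucc : v ∈ C k → v ∈ C (k + 1) := fun h => C.apply_le_apply_succ k h
    by_cases v ∈ C k <;> by_cases v ∈ C (k + 1) <;> simp_all
  rw [Finset.sum_congr rfl fun k _ => hsub k,
    Finset.sum_range_sub fun k => (if v ∈ C k then 1 else 0 : A)]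
  simp [C.apply_eq_top le_rfl, hv]

end Basic

section InsertAt

variable {R V : Type*} [DivisionRing R] [AddCommGroup V] [Module R V] [FiniteDimensional R V]

/-- The flag which agrees with `C` up to dimension `m`, then adjoins `v`, and then continues with
the members of `C`, until one of these contains `v`. -/
def insertAt (m : ℕ) (v : V) (C : CompleteFlag R V) : CompleteFlag R V where
  toFun j := if j ≤ m ∨ v ∈ C j then C j else span R {v} ⊔ C (j - 1)
  monotone' := monotone_nat_of_le_succ fun j => by
    have hj := C.apply_le_apply_succ j
    split_ifs with h h' h'
    · exact hj
    · exact le_sup_of_le_right le_rfl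
    · have hv : v ∈ C (j + 1) := by grind
      exact sup_le ((span_singleton_le_iff_mem v _).mpr hv) (C.monotone (by omega))
    · exact sup_le_sup_left (C.monotone (by omega)) _
  finrank_eq' j := by
    by_cases h : j ≤ m ∨ v ∈ C j
    · rw [if_pos h, C.finrank_apply]
    · rw [if_neg h]
      push Not at h
      have hj : j < finrank R V := by
        by_contra! hle
        exact h.2 (C.apply_eq_top hle ▸ mem_top)
      rw [sup_comm, finrank_sup_span_singleton fun hv => h.2 (C.monotone (by omega) hv),
        C.finrank_apply]
      omega

/-- The flag obtained from `C` by moving the line spanned by `v` to the front: its members are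
`0` and the sums of this line with the members of `C`. -/
def moveToFront (v : V) (C : CompleteFlag R V) : CompleteFlag R V := insertAt 0 v C

lemma insertAt_apply (m : ℕ) (v : V) (C : CompleteFlag R V) (j : ℕ) :
    insertAt m v C j = if j ≤ m ∨ v ∈ C j then C j else span R {v} ⊔ C (j - 1) := rfl

lemma mem_insertAt_apply {m : ℕ} {v : V} {C : CompleteFlag R V} {j : ℕ} (hj : m < j) :
    v ∈ insertAt m v C j := by
  rw [insertAt_apply]
  split_ifs with h
  · exact h.resolve_left (by omega)
  · exact mem_sup_left (mem_span_singleton_self v)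

lemma moveToFront_insertAt (m : ℕ) (v : V) (C : CompleteFlag R V) :
    moveToFront v (insertAt m v C) = moveToFront v C := by
  refine DFunLike.ext _ _ fun j => ?_
  by_cases hj : m < j
  · have := mem_insertAt_apply (v := v) (C := C) hj
    grind [moveToFront, insertAt_apply]
  · grind [moveToFront, insertAt_apply]

lemma mem_moveToFront_apply_one (v : V) (C : CompleteFlag R V) : v ∈ moveToFront v C 1 :=
  mem_insertAt_apply one_pos

lemma moveToFront_of_mem_apply_one {v : V} {C : CompleteFlag R V} (hv : v ∈ C 1) :
    moveToFront v C = C := by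
  refine DFunLike.ext _ _ fun j => ?_
  rw [moveToFront, insertAt_apply, if_pos]
  exact j.eq_zero_or_pos.imp (·.le) fun hj => C.monotone hj hv

lemma range_moveToFront (v : V) (C : CompleteFlag R V) :
    Set.range (moveToFront v C) = insert ⊥ (Set.range fun j => span R {v} ⊔ C j) := by
  have hsup : ∀ {j}, v ∈ C j → span R {v} ⊔ C j = C j := fun hv =>
    sup_of_le_right ((span_singleton_le_iff_mem v _).mpr hv)
  refine Set.Subset.antisymm ?_ (Set.insert_subset ⟨0, ?_⟩ ?_)
  · rintro _ ⟨j, rfl⟩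
    rw [moveToFront, insertAt_apply]
    split_ifs with h
    · exact h.imp (fun hj => by rw [Nat.le_zero.mp hj, C.apply_zero]) fun hv => ⟨j, hsup hv⟩
    · exact Or.inr ⟨j - 1, rfl⟩
  · rw [apply_zero]
  · rintro _ ⟨j, rfl⟩
    by_cases hv : v ∈ C j
    · exact ⟨j, (if_pos (Or.inr hv)).trans (hsup hv).symm⟩
    · refine ⟨j + 1, ?_⟩
      rw [moveToFront, insertAt_apply]
      split_ifs with h
      · exact (C.span_singleton_sup_apply (h.resolve_left (by omega)) hv).symm
      · rfl

lemma eqOn_insertAt {k : ℕ} {v : V} {C : CompleteFlag R V} (hv : v ∈ C (k + 2)) :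
    Set.EqOn (insertAt k v C) C {k + 1}ᶜ := fun j (hj : j ≠ k + 1) => by
  rw [insertAt_apply, if_pos]
  exact (le_or_gt j k).imp_right fun hkj => C.monotone (by omega) hv

end InsertAt

section Adjacent

variable {R V : Type*} [DivisionRing R] [AddCommGroup V] [Module R V]

/-- Two distinct flags are `k`-adjacent if they differ in the member of dimension `k` only. -/
def Adjacent (k : ℕ) (C D : CompleteFlag R V) : Prop := D ≠ C ∧ Set.EqOn D C {k}ᶜ

variable [FiniteDimensional R V] {k : ℕ} {v : V} {C D : CompleteFlag R V}

lemma eq_insertAt_of_eqOn (h : Set.EqOn D C {k + 1}ᶜ) (hv : v ∈ D (k + 1)) (hv' : v ∉ C (k + 1)) :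
    D = insertAt k v C := by
  have hk : D k = C k := h (by simp)
  have hvC : v ∈ C (k + 2) := h (show k + 2 ∈ {k + 1}ᶜ by simp) ▸ D.apply_le_apply_succ _ hv
  have hvD : v ∉ D k := hk ▸ fun hmem => hv' (C.apply_le_apply_succ k hmem)
  refine eq_of_eqOn (h.trans (eqOn_insertAt hvC).symm) ?_
  rw [insertAt_apply, if_neg (by simp [hv']), ← D.span_singleton_sup_apply hv hvD, hk,
    Nat.add_sub_cancel]

lemma Adjacent.notMem (h : Adjacent (k + 1) C D) (hv : v ∈ D (k + 1)) (hv' : v ∉ D k) :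
    v ∉ C (k + 1) := fun hmem => h.1 <| eq_of_eqOn h.2 <| by
  have hk : D k = C k := h.2 (by simp)
  rw [← D.span_singleton_sup_apply hv hv', ← C.span_singleton_sup_apply hmem (hk ▸ hv'), hk]

lemma adjacent_insertAt (hv : v ∈ C (k + 2)) (hv' : v ∉ C (k + 1)) :
    Adjacent (k + 1) C (insertAt k v C) :=
  ⟨fun h => hv' (h ▸ mem_insertAt_apply k.lt_succ_self), eqOn_insertAt hv⟩

lemma adjacent_and_mem_iff_eq_insertAt :
    Adjacent (k + 1) C D ∧ v ∈ D (k + 1) ∧ v ∉ D k ↔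
      D = insertAt k v C ∧ v ∈ C (k + 2) ∧ v ∉ C (k + 1) := by
  constructor
  · rintro ⟨h, hv, hv'⟩
    have hk : D (k + 2) = C (k + 2) := h.2 (by simp)
    exact ⟨eq_insertAt_of_eqOn h.2 hv (h.notMem hv hv'), hk ▸ D.apply_le_apply_succ _ hv,
      h.notMem hv hv'⟩
  · rintro ⟨rfl, hv, hv'⟩
    refine ⟨adjacent_insertAt hv hv', mem_insertAt_apply k.lt_succ_self, ?_⟩
    rw [insertAt_apply, if_pos (Or.inl le_rfl)]
    exact fun h => hv' (C.apply_le_apply_succ k h)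

lemma insertAt_eq_iff (hv : v ∈ C (k + 2)) (hv' : v ∉ C (k + 1)) :
    insertAt k v C = D ↔ Adjacent (k + 1) C D ∧ v ∈ D (k + 1) := by
  constructor
  · rintro rfl
    exact ⟨adjacent_insertAt hv hv', mem_insertAt_apply k.lt_succ_self⟩
  · exact fun h => (eq_insertAt_of_eqOn h.1.2 h.2 hv').symm

end Adjacent

section Walk

variable {R V : Type*} [DivisionRing R] [AddCommGroup V] [Module R V]

/-- The total weight of the vectors of a subspace. -/
def totalWeight [Fintype V] {A : Type*} [AddCommMonoid A] (w : V → A) (U : Submodule R V) : A :=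
  ∑ v with v ∈ U, w v

lemma totalWeight_lt_sum [Fintype V] {A : Type*} [AddCommMonoid A] [PartialOrder A]
    [IsOrderedCancelAddMonoid A] {w : V → A} (hw : ∀ v, 0 ≤ w v) (hw' : ∀ v ≠ 0, 0 < w v)
    {U : Submodule R V} (hU : U ≠ ⊤) : totalWeight w U < ∑ v, w v := by
  obtain ⟨v, hv⟩ : ∃ v, v ∉ U := by
    by_contra! h
    exact hU (eq_top_iff'.mpr h)
  exact Finset.sum_lt_sum_of_subset (Finset.filter_subset _ _) (Finset.mem_univ v) (by simpa)
    (hw' v fun h => hv (h ▸ U.zero_mem)) fun u _ _ => hw u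

lemma sum_mem_and_notMem_eq_totalWeight_sub [Fintype V] {A : Type*} [AddCommGroup A] (w : V → A)
    {U W : Submodule R V} (h : U ≤ W) :
    ∑ v with v ∈ W ∧ v ∉ U, w v = totalWeight w W - totalWeight w U := by
  rw [eq_sub_iff_add_eq, totalWeight, totalWeight,
    ← Finset.sum_filter_add_sum_filter_not (Finset.univ.filter (· ∈ W)) (· ∉ U),
    Finset.filter_filter, Finset.filter_filter]
  congr 2
  ext v
  simpa using @h v

variable [FiniteDimensional R V]

variable (R) in
/-- The transition matrix of the walk on complete flags which moves to the front the line spanned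
by a vector `v` chosen with weight `w v`. -/
def moveToFrontMatrix [Fintype V] {A : Type*} [AddCommMonoid A] (w : V → A) :
    Matrix (CompleteFlag R V) (CompleteFlag R V) A :=
  fun C D => ∑ v with moveToFront v C = D, w v

/-- The flag induced by `C` on `V ⧸ U` consists of members of `D`, that is, of their images:
the predicate interpolates between `C = D` for `U = ⊥` and `True` for `U = ⊤`. -/
def InducesMembersOf (U : Submodule R V) (C D : CompleteFlag R V) : Prop :=
  ∀ j, U ⊔ C j ∈ Set.range D

variable {U : Submodule R V} {C D : CompleteFlag R V} {v : V}

lemma inducesMembersOf_bot : InducesMembersOf ⊥ C D ↔ C = D := by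
  simp only [InducesMembersOf, bot_sup_eq]
  exact ⟨eq_of_forall_mem_range, by rintro rfl; exact Set.mem_range_self⟩

lemma inducesMembersOf_top : InducesMembersOf ⊤ C D := fun _ =>
  ⟨finrank R V, by rw [top_sup_eq, D.apply_eq_top le_rfl]⟩

lemma inducesMembersOf_moveToFront (hU : U ∈ Set.range D) :
    InducesMembersOf U (moveToFront v C) D ↔ InducesMembersOf (span R {v} ⊔ U) C D := by
  have h := (Set.forall_mem_range (f := moveToFront v C) (p := fun W => U ⊔ W ∈ Set.range D)).symm
  rw [range_moveToFront, Set.forall_mem_insert, Set.forall_mem_range, sup_bot_eq] at h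
  simp only [InducesMembersOf, h, hU, true_and, sup_left_comm, sup_assoc]

lemma inducesMembersOf_moveToFront_apply {k : ℕ} :
    InducesMembersOf (D k) (moveToFront v C) D ↔
      v ∈ D k ∧ InducesMembersOf (D k) C D ∨
        (v ∈ D (k + 1) ∧ v ∉ D k) ∧ InducesMembersOf (D (k + 1)) C D := by
  rw [inducesMembersOf_moveToFront ⟨k, rfl⟩]
  by_cases hv : v ∈ D k
  · rw [sup_of_le_right ((span_singleton_le_iff_mem v _).mpr hv)]
    tauto
  by_cases hv' : v ∈ D (k + 1)
  · rw [D.span_singleton_sup_apply hv' hv]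
    tauto
  · simp only [hv, hv', false_and, or_false, iff_false]
    intro h
    refine hv' (D.mem_apply_succ_of_span_singleton_sup_mem_range ?_)
    simpa only [apply_zero, sup_bot_eq] using h 0

variable [Fintype V] {A : Type*}

lemma sum_vecMul_moveToFrontMatrix [NonUnitalNonAssocSemiring A] (w : V → A)
    (Φ : CompleteFlag R V → A) (p : CompleteFlag R V → Prop) :
    ∑ C with p C, Matrix.vecMul Φ (moveToFrontMatrix R w) C =
      ∑ C, Φ C * ∑ v with p (moveToFront v C), w v := by
  simp only [Matrix.vecMul, dotProduct, moveToFrontMatrix]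
  rw [Finset.sum_comm]
  refine Finset.sum_congr rfl fun C _ => ?_
  rw [← Finset.mul_sum, Finset.sum_congr rfl fun D _ => Finset.sum_filter _ _, Finset.sum_comm]
  simp only [Finset.sum_ite_eq, Finset.mem_filter_univ, ← Finset.sum_filter]

lemma sum_inducesMembersOf_moveToFront_apply [AddCommGroup A] (w : V → A)
    (C D : CompleteFlag R V) (k : ℕ) :
    ∑ v with InducesMembersOf (D k) (moveToFront v C) D, w v =
      (if InducesMembersOf (D k) C D then totalWeight w (D k) else 0) +
        if InducesMembersOf (D (k + 1)) C D then totalWeight w (D (k + 1)) - totalWeight w (D k)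
        else 0 := by
  simp only [inducesMembersOf_moveToFront_apply]
  rw [Finset.filter_or, Finset.sum_union (Finset.disjoint_filter.mpr (by tauto)),
    ← sum_mem_and_notMem_eq_totalWeight_sub w (D.apply_le_apply_succ k)]
  congr 1 <;> split_ifs with h <;> simp [h, totalWeight]

lemma one_sub_totalWeight_mul_sum [CommRing A] {w : V → A} {Ψ : CompleteFlag R V → A}
    (hΨ : Matrix.vecMul Ψ (moveToFrontMatrix R w) = Ψ) (D : CompleteFlag R V) (k : ℕ) :
    (1 - totalWeight w (D k)) * ∑ C with InducesMembersOf (D k) C D, Ψ C =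
      (totalWeight w (D (k + 1)) - totalWeight w (D k)) *
        ∑ C with InducesMembersOf (D (k + 1)) C D, Ψ C := by
  have h := sum_vecMul_moveToFrontMatrix w Ψ (InducesMembersOf (D k) · D)
  simp only [hΨ, sum_inducesMembersOf_moveToFront_apply, mul_add, mul_ite, mul_zero,
    Finset.sum_add_distrib, ← Finset.sum_filter, ← Finset.sum_mul] at h
  linear_combination h

theorem apply_eq_prod_of_vecMul_eq_self [Field A] {w : V → A}
    (hw : ∀ U : Submodule R V, U ≠ ⊤ → totalWeight w U ≠ 1) {Ψ : CompleteFlag R V → A}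
    (hΨ : Matrix.vecMul Ψ (moveToFrontMatrix R w) = Ψ) (hΨ1 : ∑ C, Ψ C = 1)
    (D : CompleteFlag R V) :
    Ψ D = ∏ k ∈ Finset.range (finrank R V),
      (totalWeight w (D (k + 1)) - totalWeight w (D k)) / (1 - totalWeight w (D k)) := by
  suffices h : ∀ m ≤ finrank R V,
      Ψ D = (∏ k ∈ Finset.range m,
        (totalWeight w (D (k + 1)) - totalWeight w (D k)) / (1 - totalWeight w (D k))) *
          ∑ C with InducesMembersOf (D m) C D, Ψ C by
    simpa [D.apply_eq_top le_rfl, inducesMembersOf_top, hΨ1] using h _ le_rfl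
  intro m hm
  induction m with
  | zero => simp [inducesMembersOf_bot, Finset.sum_filter]
  | succ m ih =>
    have hne : 1 - totalWeight w (D m) ≠ 0 :=
      sub_ne_zero.mpr (hw _ (D.apply_ne_top hm)).symm
    rw [ih (by omega), Finset.prod_range_succ, mul_assoc, div_mul_eq_mul_div,
      ← one_sub_totalWeight_mul_sum hΨ, mul_div_cancel_left₀ _ hne]

lemma moveToFrontMatrix_mem_rowStochastic [Semiring A] [PartialOrder A] [IsOrderedRing A]
    {w : V → A} (hw : ∀ v, 0 ≤ w v) (hw1 : ∑ v, w v = 1) :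
    moveToFrontMatrix R w ∈ Matrix.rowStochastic A (CompleteFlag R V) := by
  refine (Matrix.mem_rowStochastic_iff_sum).mpr
    ⟨fun C D => Finset.sum_nonneg fun v _ => hw v, fun C => ?_⟩
  rw [← hw1]
  exact Finset.sum_fiberwise _ _ _

end Walk

section OfBasis

variable {R V : Type*} [DivisionRing R] [AddCommGroup V] [Module R V] {m : ℕ}

/-- The flag spanned by the initial segments of a basis. -/
def ofBasis (b : Basis (Fin m) R V) : CompleteFlag R V where
  toFun k := span R (b '' {i | i < k})
  monotone' _ _ h := span_mono (Set.image_mono fun _ hi => lt_of_lt_of_le hi h)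
  finrank_eq' k := by
    have hcard := finrank_span_eq_card
      (b.linearIndependent.comp ((↑) : {i : Fin m // (i : ℕ) < k} → Fin m) Subtype.val_injective)
    rw [Set.range_comp, Subtype.range_coe_subtype] at hcard
    rw [hcard, Fintype.card_subtype, Fin.card_filter_val_lt, finrank_eq_card_basis b,
      Fintype.card_fin, min_comm]

lemma mem_ofBasis_apply {b : Basis (Fin m) R V} {k : ℕ} {v : V} :
    v ∈ ofBasis b k ↔ ∀ i : Fin m, k ≤ i → b.repr v i = 0 := by
  refine b.mem_span_image.trans (forall_congr' fun i => ?_)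
  simp only [Finset.mem_coe, Finsupp.mem_support_iff, Set.mem_ofPred_eq, ← not_le]
  tauto

lemma exists_mem_apply_succ_and_notMem (C : CompleteFlag R V) {k : ℕ} (hk : k < finrank R V) :
    ∃ v ∈ C (k + 1), v ∉ C k := by
  refine SetLike.exists_of_lt ((C.apply_le_apply_succ k).lt_of_ne fun h => ?_)
  have := congrArg (fun U : Submodule R V => finrank R U) h
  simp only [C.finrank_apply] at this
  omega

variable [FiniteDimensional R V]

instance : Nonempty (CompleteFlag R V) := ⟨ofBasis (finBasis R V)⟩

lemma eq_of_forall_le {C D : CompleteFlag R V} (h : ∀ k, C k ≤ D k) : C = D :=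
  DFunLike.ext _ _ fun k => eq_of_le_of_finrank_eq (h k) (by simp only [finrank_apply])

lemma exists_eq_ofBasis (C : CompleteFlag R V) (hm : finrank R V = m) :
    ∃ b : Basis (Fin m) R V, ofBasis b = C := by
  choose! v hv hv' using fun k hk => C.exists_mem_apply_succ_and_notMem (k := k) hk
  have hspan : ∀ k ≤ m, C k ≤ span R (Set.range fun i : Fin m => v i) := by
    intro k
    induction k with
    | zero => simp
    | succ k ih =>
      intro hk
      rw [← C.span_singleton_sup_apply (hv k (by omega)) (hv' k (by omega))]
      exact sup_le (span_mono (Set.singleton_subset_iff.mpr ⟨⟨k, hk⟩, rfl⟩)) (ih (by omega))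
  have htop := (C.apply_eq_top hm.le).ge.trans (hspan m le_rfl)
  let b := basisOfTopLeSpanOfCardEqFinrank _ htop (by rw [Fintype.card_fin, hm])
  refine ⟨b, eq_of_forall_le fun k => span_le.mpr ?_⟩
  rintro _ ⟨i, hi, rfl⟩
  rw [coe_basisOfTopLeSpanOfCardEqFinrank]
  exact C.monotone (Nat.succ_le_of_lt hi) (hv i (by omega))

end OfBasis

section ColFlag

variable {R : Type*} [Field R] {m : ℕ}

/-- The flag in `R ^ m` spanned by the initial segments of the columns of an invertible matrix. -/
def colFlag (g : GL (Fin m) R) : CompleteFlag R (Fin m → R) :=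
  ofBasis ((Pi.basisFun R (Fin m)).map (Matrix.toLin'OfInv g.inv_mul g.mul_inv))

lemma mem_colFlag_apply {g : GL (Fin m) R} {k : ℕ} {v : Fin m → R} :
    v ∈ colFlag g k ↔ ∀ i : Fin m, k ≤ i → (g⁻¹.1 *ᵥ v) i = 0 := by
  rw [colFlag, mem_ofBasis_apply]
  rfl

lemma mem_colFlag_mul_apply {g h : GL (Fin m) R} {k : ℕ} {v : Fin m → R} :
    v ∈ colFlag (g * h) k ↔ g⁻¹.1 *ᵥ v ∈ colFlag h k := by
  simp only [mem_colFlag_apply, mul_inv_rev, Units.val_mul, Matrix.mulVec_mulVec]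

lemma mulVec_mem_colFlag_mul_apply {g h : GL (Fin m) R} {k : ℕ} {v : Fin m → R} :
    g.1 *ᵥ v ∈ colFlag (g * h) k ↔ v ∈ colFlag h k := by
  rw [mem_colFlag_mul_apply, Matrix.mulVec_mulVec, ← Units.val_mul, inv_mul_cancel, Units.val_one,
    Matrix.one_mulVec]

lemma mulVec_mem_colFlag_apply {g : GL (Fin m) R} {k : ℕ} {v : Fin m → R} :
    g.1 *ᵥ v ∈ colFlag g k ↔ ∀ i : Fin m, k ≤ i → v i = 0 := by
  simp [mem_colFlag_apply]

lemma col_mul_mem_colFlag_apply {g h : GL (Fin m) R} {k : ℕ} {j : Fin m} :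
    (g * h).1.col j ∈ colFlag g k ↔ ∀ i : Fin m, k ≤ i → h.1 i j = 0 :=
  mulVec_mem_colFlag_apply (v := h.1.col j)

lemma col_mem_colFlag_apply {g : GL (Fin m) R} {k : ℕ} {j : Fin m} :
    g.1.col j ∈ colFlag g k ↔ j < k := by
  have h := col_mul_mem_colFlag_apply (g := g) (h := 1) (k := k) (j := j)
  rw [mul_one] at h
  rw [h]
  simp only [Units.val_one, Matrix.one_apply, ite_eq_right_iff, one_ne_zero, imp_false]
  exact ⟨fun h => not_le.mp fun hk => h j hk rfl, fun h i hi hij => by omega⟩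

lemma colFlag_mul_apply_eq_iff {g h : GL (Fin m) R} {k : ℕ} :
    colFlag (g * h) k = colFlag g k ↔ ∀ i j : Fin m, j < k → k ≤ i → h.1 i j = 0 := by
  refine ⟨fun heq i j hj => col_mul_mem_colFlag_apply.mp (heq ▸ col_mem_colFlag_apply.mpr hj) i,
    fun hh => eq_of_le_of_finrank_eq (fun v hv => ?_) (by simp only [finrank_apply])⟩
  rw [mem_colFlag_mul_apply, mem_colFlag_apply] at hv
  refine mem_colFlag_apply.mpr fun i hi => ?_
  calc (g⁻¹.1 *ᵥ v) i = (h.1 *ᵥ (h⁻¹.1 *ᵥ (g⁻¹.1 *ᵥ v))) i := by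
        rw [Matrix.mulVec_mulVec (M := h.1), Units.mul_inv, Matrix.one_mulVec]
    _ = ∑ j, h.1 i j * (h⁻¹.1 *ᵥ (g⁻¹.1 *ᵥ v)) j := rfl
    _ = 0 := Finset.sum_eq_zero fun j _ => by
        obtain hj | hj := lt_or_ge (j : ℕ) k
        · rw [hh i j hj hi, zero_mul]
        · rw [hv j hj, mul_zero]

lemma colFlag_mul_eq_iff {g h : GL (Fin m) R} :
    colFlag (g * h) = colFlag g ↔ ∀ i j : Fin m, j < i → h.1 i j = 0 := by
  simp only [DFunLike.ext_iff, colFlag_mul_apply_eq_iff]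
  exact ⟨fun H i j hij => H i i j hij le_rfl, fun H k i j hj hi => H i j (hj.trans_le hi)⟩

lemma colFlag_surjective : Function.Surjective (colFlag (R := R) (m := m)) := fun C => by
  obtain ⟨b, rfl⟩ := C.exists_eq_ofBasis (finrank_fin_fun R)
  let g : GL (Fin m) R := ⟨(Pi.basisFun R _).toMatrix b, b.toMatrix (Pi.basisFun R _),
    Basis.toMatrix_mul_toMatrix_flip _ _, Basis.toMatrix_mul_toMatrix_flip _ _⟩
  refine ⟨g, congrArg ofBasis (Basis.eq_of_apply_eq fun i => ?_)⟩
  ext j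
  simp [g, Matrix.toLin'OfInv_apply, Basis.toMatrix_apply]

end ColFlag

end CompleteFlag

open CompleteFlag

section CosetEquivFlag

variable {F : Type} [Field F] {n : ℕ}

lemma colFlag_eq_colFlag_iff {g h : GLn F n} :
    colFlag g = colFlag h ↔ (g : Cosets F n) = h := by
  rw [QuotientGroup.eq, ← mul_inv_cancel_left g h, eq_comm, colFlag_mul_eq_iff, inv_mul_cancel_left]
  rfl

/-- The bijection `G/B ≃ {complete flags of F ^ n}` sending `gB` to the flag spanned by the columns
of `g`. -/
def flagEquiv : Cosets F n ≃ CompleteFlag F (Fin n → F) :=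
  .ofBijective
    (Quotient.lift colFlag fun _ _ h => colFlag_eq_colFlag_iff.mpr (Quotient.sound h))
    ⟨fun C D => Quotient.inductionOn₂ C D fun _ _ h => colFlag_eq_colFlag_iff.mp h,
      fun D => let ⟨g, hg⟩ := colFlag_surjective D; ⟨g, hg⟩⟩

lemma flagEquiv_mk (g : GLn F n) : flagEquiv (g : Cosets F n) = colFlag g := rfl

lemma colFlag_out (C : Cosets F n) : colFlag C.out = flagEquiv C := by
  rw [← flagEquiv_mk, QuotientGroup.out_eq']

lemma mk_eq_iff_colFlag_eq {g : GLn F n} {C : Cosets F n} :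
    (g : Cosets F n) = C ↔ colFlag g = flagEquiv C := by
  rw [← flagEquiv_mk, flagEquiv.apply_eq_iff_eq]

end CosetEquivFlag

section Hecke

variable {F : Type} [Field F] {n : ℕ} (g : GLn F n) {c r : Fin n}

lemma col_mul_permGL [Fintype F] [DecidableEq F] (σ : Equiv.Perm (Fin n)) (j : Fin n) :
    (g * permGL F n σ).1.col j = g.1.col (σ j) := by
  ext i
  simp [permGL, permMat, Matrix.mul_apply]

lemma col_mul_transvGL (hrc : r ≠ c) (t : F) :
    (g * transvGL F n r c hrc t).1.col c = g.1.col c + t • g.1.col r := by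
  ext i
  simp [transvGL]

lemma eqOn_colFlag_mul_permGL_swap [Fintype F] [DecidableEq F] (hr : (r : ℕ) = c + 1) :
    Set.EqOn (colFlag (g * permGL F n (Equiv.swap c r))) (colFlag g) {(r : ℕ)}ᶜ := by
  refine fun l (hl : l ≠ r) => colFlag_mul_apply_eq_iff.mpr fun i j hj hi => if_neg ?_
  rw [Equiv.swap_apply_def]
  grind

lemma eqOn_colFlag_mul_transvGL (hr : (r : ℕ) = c + 1) (hrc : r ≠ c) (t : F) :
    Set.EqOn (colFlag (g * transvGL F n r c hrc t)) (colFlag g) {(r : ℕ)}ᶜ := by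
  refine fun l (hl : l ≠ r) => colFlag_mul_apply_eq_iff.mpr fun i j hj hi => ?_
  have hij : i ≠ j := by omega
  have hentry : ¬(r = i ∧ c = j) := by omega
  simp [transvGL, Matrix.transvection, hij, hentry]

lemma colFlag_mul_permGL_swap [Fintype F] [DecidableEq F] (hr : (r : ℕ) = c + 1) :
    colFlag (g * permGL F n (Equiv.swap c r)) = insertAt c (g.1.col r) (colFlag g) := by
  have hcol : (g * permGL F n (Equiv.swap c r)).1.col c = g.1.col r := by
    rw [col_mul_permGL, Equiv.swap_apply_left]
  refine eq_insertAt_of_eqOn (hr ▸ eqOn_colFlag_mul_permGL_swap g hr) ?_ ?_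
  · rw [← hcol, col_mem_colFlag_apply]
    exact Nat.lt_succ_self _
  · rw [col_mem_colFlag_apply]
    omega

lemma colFlag_mul_transvGL (hr : (r : ℕ) = c + 1) (hrc : r ≠ c) {t : F} (ht : t ≠ 0) :
    colFlag (g * transvGL F n r c hrc t) =
      insertAt c (g.1.col c + t • g.1.col r) (colFlag g) := by
  have hc : g.1.col c ∈ colFlag g (c + 1) := col_mem_colFlag_apply.mpr (Nat.lt_succ_self _)
  refine eq_insertAt_of_eqOn (hr ▸ eqOn_colFlag_mul_transvGL g hr hrc t) ?_ ?_
  · rw [← col_mul_transvGL g hrc, col_mem_colFlag_apply]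
    exact Nat.lt_succ_self _
  · rw [add_mem_cancel_left hc, smul_mem_iff _ ht, col_mem_colFlag_apply]
    omega

lemma ite_mem_add_card_filter_eq_one {V : Type*} [AddCommGroup V] [Module F V]
    [FiniteDimensional F V] [Fintype F] [DecidableEq F] (C : CompleteFlag F V) {u w : V} {k : ℕ}
    (hu : u ∈ C (k + 1)) (hu' : u ∉ C k) (hw : w ∈ C (k + 1)) :
    (if w ∈ C k then 1 else 0) + #{t : F | t ≠ 0 ∧ u + t • w ∈ C k} = 1 := by
  by_cases hwk : w ∈ C k
  · have hmem : ∀ t : F, u + t • w ∉ C k := fun t => by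
      rwa [add_mem_cancel_right ((C k).smul_mem t hwk)]
    simp [hwk, hmem]
  · have hne : ∀ t : F, t ≠ 0 ∧ u + t • w ∈ C k ↔ u + t • w ∈ C k := fun t =>
      and_iff_right_of_imp fun h ht => hu' (by simpa [ht] using h)
    simp only [hwk, if_false, zero_add, hne]
    exact (Fintype.existsUnique_iff_card_one _).mp (C.existsUnique_add_smul_mem hw hwk hu)

variable {C D : Cosets F n}

lemma mk_mul_permGL_swap_eq_iff [Fintype F] [DecidableEq F] (hr : (r : ℕ) = c + 1) :
    ((C.out * permGL F n (Equiv.swap c r) : GLn F n) : Cosets F n) = D ↔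
      Adjacent (c + 1) (flagEquiv C) (flagEquiv D) ∧ C.out.1.col r ∈ flagEquiv D (c + 1) := by
  rw [mk_eq_iff_colFlag_eq, colFlag_mul_permGL_swap _ hr, colFlag_out, insertAt_eq_iff] <;>
    rw [← colFlag_out, col_mem_colFlag_apply] <;> omega

lemma mk_mul_transvGL_eq_iff (hr : (r : ℕ) = c + 1) (hrc : r ≠ c) {t : F} (ht : t ≠ 0) :
    ((C.out * transvGL F n r c hrc t : GLn F n) : Cosets F n) = D ↔
      Adjacent (c + 1) (flagEquiv C) (flagEquiv D) ∧
        C.out.1.col c + t • C.out.1.col r ∈ flagEquiv D (c + 1) := by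
  have hc : ∀ l > (c : ℕ), C.out.1.col c ∈ flagEquiv C l := fun l hl => by
    rwa [← colFlag_out, col_mem_colFlag_apply]
  rw [mk_eq_iff_colFlag_eq, colFlag_mul_transvGL _ hr hrc ht, colFlag_out, insertAt_eq_iff] <;>
    rw [add_mem_cancel_left (hc _ (by omega)), smul_mem_iff _ ht, ← colFlag_out,
      col_mem_colFlag_apply] <;> omega

variable [Fintype F] [DecidableEq F] {K : Type} [Field K] {v : Fin n → F}

lemma genGB_apply {k : ℕ} (hk : k + 1 < n) :
    genGB F n K k C D = if Adjacent (k + 1) (flagEquiv C) (flagEquiv D) then 1 else 0 := by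
  rw [genGB, dif_pos hk]
  simp only [mk_mul_permGL_swap_eq_iff (c := ⟨k, Nat.lt_of_succ_lt hk⟩) (r := ⟨k + 1, hk⟩) rfl]
  rw [Finset.filter_congr fun t _ => and_congr_right (mk_mul_transvGL_eq_iff rfl _)]
  by_cases hadj : Adjacent (k + 1) (flagEquiv C) (flagEquiv D)
  · have hcol : ∀ (j : Fin n) {l : ℕ}, l ≠ k + 1 →
        (C.out.1.col j ∈ flagEquiv D l ↔ (j : ℕ) < l) := fun j l hl => by
      rw [hadj.2 hl, ← colFlag_out, col_mem_colFlag_apply]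
    have hu : C.out.1.col ⟨k, Nat.lt_of_succ_lt hk⟩ ∉ flagEquiv D (k + 1) := fun h =>
      hadj.notMem h (by rw [hcol] <;> simp) (by rw [← colFlag_out, col_mem_colFlag_apply]; simp)
    have hw : C.out.1.col ⟨k + 1, hk⟩ ∈ flagEquiv D (k + 2) := by rw [hcol] <;> simp
    have h := ite_mem_add_card_filter_eq_one (flagEquiv D) (by rw [hcol] <;> simp) hu hw
    simpa only [hadj, true_and, if_true, Nat.cast_add, Nat.cast_ite, Nat.cast_one, Nat.cast_zero]
      using congr_arg (Nat.cast (R := K)) h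
  · simp [hadj]

lemma prodGenGB_apply (hv : v ∈ flagEquiv D 1) (hv0 : v ≠ 0) {k : ℕ} (hk : k < n)
    (C : Cosets F n) :
    prodGenGB F n K k C D =
      if (v ∈ flagEquiv C (k + 1) ∧ v ∉ flagEquiv C k) ∧
        moveToFront v (flagEquiv C) = flagEquiv D then 1 else 0 := by
  induction k generalizing C with
  | zero =>
    simp only [prodGenGB, Matrix.one_apply, ← flagEquiv.apply_eq_iff_eq (x := C)]
    refine if_congr ⟨fun h => ?_, fun h => ?_⟩ rfl rfl
    · rw [h]
      exact ⟨⟨hv, by simpa⟩, moveToFront_of_mem_apply_one hv⟩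
    · rw [← h.2, moveToFront_of_mem_apply_one h.1.1]
  | succ k ih =>
    have hstep : ∀ E, genGB F n K k C E * prodGenGB F n K k E D =
        if flagEquiv E = insertAt k v (flagEquiv C) then
          if (v ∈ flagEquiv C (k + 2) ∧ v ∉ flagEquiv C (k + 1)) ∧
            moveToFront v (flagEquiv C) = flagEquiv D then 1 else 0
        else 0 := fun E => by
      rw [genGB_apply hk, ih (by omega), ite_zero_mul_ite_zero, one_mul, ← ite_and]
      refine if_congr ?_ rfl rfl
      rw [← and_assoc, adjacent_and_mem_iff_eq_insertAt, and_assoc, and_congr_right_iff]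
      intro hE
      rw [hE, moveToFront_insertAt]
    simp only [prodGenGB, Matrix.mul_apply, hstep]
    rw [flagEquiv.sum_comp fun E => if E = insertAt k v (flagEquiv C) then _ else (0 : K),
      Finset.sum_ite_eq' _ _ fun _ => _, if_pos (Finset.mem_univ _)]

lemma sum_prodGenGB_apply (hv : v ∈ flagEquiv D 1) (hv0 : v ≠ 0) (C : Cosets F n) :
    (∑ k ∈ Finset.range n, prodGenGB F n K k) C D =
      if moveToFront v (flagEquiv C) = flagEquiv D then 1 else 0 := by
  have h := sum_range_ite_mem_apply_succ (A := K) (flagEquiv C) hv0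
  rw [finrank_fin_fun] at h
  rw [Matrix.sum_apply, Finset.sum_congr rfl fun k hk =>
    prodGenGB_apply hv hv0 (Finset.mem_range.mp hk) C]
  split_ifs with hD <;> simp [hD, h]

end Hecke

section Pivot

variable {ι R : Type*} [LinearOrder ι]

/-- The topmost nonzero entry of `v` is in row `s`. -/
def IsPivot [Zero R] (v : ι → R) (s : ι) : Prop := v s ≠ 0 ∧ ∀ i < s, v i = 0

lemma IsPivot.unique [Zero R] {v : ι → R} {s t : ι} (hs : IsPivot v s) (ht : IsPivot v t) :
    s = t :=
  le_antisymm (not_lt.mp fun h => ht.1 (hs.2 t h)) (not_lt.mp fun h => hs.1 (ht.2 s h))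

lemma not_isPivot_zero [Zero R] (s : ι) : ¬IsPivot (0 : ι → R) s := fun h => h.1 rfl

lemma exists_isPivot [WellFoundedLT ι] [Zero R] {v : ι → R} (hv : v ≠ 0) : ∃ s, IsPivot v s := by
  obtain ⟨s, hs, hmin⟩ := exists_minimal_of_wellFoundedLT (v · ≠ 0) (Function.ne_iff.mp hv)
  exact ⟨s, hs, fun i hi => not_not.mp fun h => hi.not_ge (hmin h hi.le)⟩

lemma isPivot_smul_iff [MonoidWithZero R] [NoZeroDivisors R] {a : R} (ha : a ≠ 0) {v : ι → R}
    {s : ι} : IsPivot (a • v) s ↔ IsPivot v s := by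
  simp [IsPivot, ha]

end Pivot

section VectorWeight

variable {F : Type*} [Field F] [Fintype F] {n : ℕ} {K : Type*} [Field K]

/-- The weight of a vector: the nonzero vectors of a line share equally the weight which `XGB`
attaches to their common pivot row. -/
def vectorWeight (x : Fin n → K) (v : Fin n → F) : K :=
  ∑ s with IsPivot v s, x s / (Fintype.card F : K) ^ (n - 1 - (s : ℕ)) / (Fintype.card F - 1)

lemma vectorWeight_eq_of_isPivot (x : Fin n → K) {v : Fin n → F} {s : Fin n} (hs : IsPivot v s) :
    vectorWeight x v = x s / (Fintype.card F : K) ^ (n - 1 - (s : ℕ)) / (Fintype.card F - 1) := by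
  have h : ∀ t, IsPivot v t ↔ t = s := fun t => ⟨fun ht => ht.unique hs, fun ht => ht ▸ hs⟩
  simp [vectorWeight, h, Finset.filter_eq']

@[simp] lemma vectorWeight_zero (x : Fin n → K) : vectorWeight x (0 : Fin n → F) = 0 := by
  simp [vectorWeight, not_isPivot_zero]

lemma vectorWeight_smul (x : Fin n → K) {a : F} (ha : a ≠ 0) (v : Fin n → F) :
    vectorWeight x (a • v) = vectorWeight x v := by
  simp only [vectorWeight, isPivot_smul_iff ha]

lemma card_sub_one_pos [LinearOrder K] [IsStrictOrderedRing K] : 0 < (Fintype.card F : K) - 1 := by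
  exact sub_pos.mpr (Nat.one_lt_cast.mpr Fintype.one_lt_card)

lemma vectorWeight_pos [LinearOrder K] [IsStrictOrderedRing K] {x : Fin n → K}
    (hx : ∀ i, 0 < x i) {v : Fin n → F} (hv : v ≠ 0) : 0 < vectorWeight x v := by
  obtain ⟨s, hs⟩ := exists_isPivot hv
  rw [vectorWeight_eq_of_isPivot x hs]
  exact div_pos (div_pos (hx s) (pow_pos (mod_cast Fintype.card_pos) _)) card_sub_one_pos

lemma vectorWeight_nonneg [LinearOrder K] [IsStrictOrderedRing K] {x : Fin n → K}
    (hx : ∀ i, 0 < x i) (v : Fin n → F) : 0 ≤ vectorWeight x v := by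
  rcases eq_or_ne v 0 with rfl | hv
  · rw [vectorWeight_zero]
  · exact (vectorWeight_pos hx hv).le

variable [CharZero K]

lemma card_sub_one_ne_zero : (Fintype.card F : K) - 1 ≠ 0 :=
  sub_ne_zero.mpr (mod_cast Fintype.one_lt_card.ne')

lemma totalWeight_span_singleton (x : Fin n → K) {v : Fin n → F} {s : Fin n} (hs : IsPivot v s) :
    totalWeight (vectorWeight x) (span F {v}) =
      x s / (Fintype.card F : K) ^ (n - 1 - (s : ℕ)) := by
  have hv : v ≠ 0 := fun h => not_isPivot_zero s (h ▸ hs)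
  have hline : ({u | u ∈ span F {v}} : Finset (Fin n → F)) =
      Finset.univ.image fun a : F => a • v := by
    ext u
    simp [mem_span_singleton]
  rw [totalWeight, hline, Finset.sum_image (smul_left_injective F hv).injOn,
    ← Finset.add_sum_erase _ _ (Finset.mem_univ 0), zero_smul, vectorWeight_zero, zero_add,
    Finset.sum_congr rfl fun a ha => vectorWeight_smul x (Finset.ne_of_mem_erase ha) v,
    Finset.sum_const, Finset.card_erase_of_mem (Finset.mem_univ 0), Finset.card_univ, nsmul_eq_mul,
    Nat.cast_pred Fintype.card_pos, vectorWeight_eq_of_isPivot x hs,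
    mul_div_cancel₀ _ card_sub_one_ne_zero]

end VectorWeight

section TsetlinOperator

variable {F : Type} [Field F] {n : ℕ}

lemma pivotRow_eq_of_isPivot {C : Cosets F n} {j s : Fin n} (hj : (j : ℕ) = 0)
    (hs : IsPivot (C.out.1.col j) s) : pivotRow F n C = s := by
  obtain rfl : j = ⟨0, s.pos⟩ := Fin.ext hj
  exact IsLeast.csInf_eq ⟨⟨s.2, hs.1⟩, fun i ⟨hi, hne⟩ =>
    not_lt.mp fun hlt => hne (hs.2 ⟨i, hi⟩ hlt)⟩

variable [Fintype F] {K : Type} [Field K] [CharZero K]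

lemma XGB_apply_self (hn : 0 < n) (x : Fin n → K) (C : Cosets F n) :
    XGB F n K x C C = totalWeight (vectorWeight x) (flagEquiv C 1) := by
  set c := C.out.1.col ⟨0, hn⟩
  have hc : ∀ k, c ∈ flagEquiv C k ↔ 0 < k := fun k => by rw [← colFlag_out, col_mem_colFlag_apply]
  have hspan : span F {c} = flagEquiv C 1 := by
    have h := (flagEquiv C).span_singleton_sup_apply ((hc 1).mpr one_pos) ((hc 0).not.mpr (by simp))
    rwa [apply_zero, sup_bot_eq] at h
  obtain ⟨s, hs⟩ : ∃ s, IsPivot c s := exists_isPivot fun h =>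
    (hc 0).not.mpr (lt_irrefl 0) (h ▸ zero_mem _)
  have hrow := pivotRow_eq_of_isPivot rfl hs
  simp only [XGB, if_pos, ← hspan, totalWeight_span_singleton x hs, hrow, s.2, dif_pos]

lemma TGB_eq_submatrix_moveToFrontMatrix [DecidableEq F] (hn : 0 < n) (x : Fin n → K) :
    TGB F n K x = (moveToFrontMatrix F (vectorWeight x)).submatrix flagEquiv flagEquiv := by
  ext C D
  rw [TGB, Matrix.mul_apply, Finset.sum_eq_single D _ (by simp), XGB_apply_self hn, totalWeight,
    Finset.mul_sum, Matrix.submatrix_apply, moveToFrontMatrix, Finset.sum_filter,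
    Finset.sum_filter]
  · refine Finset.sum_congr rfl fun v _ => ?_
    by_cases hv : v ∈ flagEquiv D 1
    · rcases eq_or_ne v 0 with rfl | hv0
      · simp
      · rw [if_pos hv, sum_prodGenGB_apply hv hv0, boole_mul]
    · have hne : moveToFront v (flagEquiv C) ≠ flagEquiv D := fun h =>
        hv (h ▸ mem_moveToFront_apply_one v _)
      rw [if_neg hv, if_neg hne]
  · intro E _ hE
    rw [XGB, if_neg hE.symm, mul_zero]

end TsetlinOperator

section CoordSubspace

variable {ι : Type*} {R : Type*} [Semiring R] {A : Finset ι}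

/-- The span of the standard basis vectors with index in `A`. -/
def coordSubspace (R : Type*) [Semiring R] (A : Finset ι) : Submodule R (ι → R) :=
  Submodule.pi (A : Set ι)ᶜ fun _ => ⊥

lemma mem_coordSubspace {v : ι → R} : v ∈ coordSubspace R A ↔ ∀ i ∉ A, v i = 0 := by
  simp [coordSubspace, Submodule.mem_pi]

lemma coordSubspace_univ [Fintype ι] : coordSubspace R (Finset.univ : Finset ι) = ⊤ :=
  eq_top_iff'.mpr fun _ => mem_coordSubspace.mpr fun i hi => absurd (Finset.mem_univ i) hi

variable [Fintype ι] [LinearOrder ι] [Fintype R] {s : ι}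

lemma filter_mem_coordSubspace_and_isPivot (hs : s ∈ A) :
    ({v | v ∈ coordSubspace R A ∧ IsPivot v s} : Finset (ι → R)) =
      Fintype.piFinset fun i =>
        if i = s then {0}ᶜ else if i ∈ A ∧ s < i then Finset.univ else {0} := by
  ext v
  simp only [Finset.mem_filter_univ, mem_coordSubspace, IsPivot, Fintype.mem_piFinset]
  constructor
  · rintro ⟨hA, hvs, hlt⟩ i
    split_ifs with h h'
    · simpa [h]
    · exact Finset.mem_univ _
    · grind
  · intro h
    have hvs := h s
    have hzero : ∀ i, i ≠ s → ¬(i ∈ A ∧ s < i) → v i = 0 := fun i hi hi' => by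
      simpa [hi, hi'] using h i
    refine ⟨fun i hi => hzero i (by grind) (by grind), by simpa using hvs, fun i hi => ?_⟩
    exact hzero i hi.ne fun h => h.2.not_gt hi

lemma card_filter_mem_coordSubspace_and_isPivot (hs : s ∈ A) :
    #{v | v ∈ coordSubspace R A ∧ IsPivot v s} =
      (Fintype.card R - 1) * Fintype.card R ^ #{i ∈ A | s < i} := by
  rw [filter_mem_coordSubspace_and_isPivot hs, Fintype.card_piFinset,
    ← Finset.mul_prod_erase _ _ (Finset.mem_univ s), if_pos rfl, Finset.card_compl,
    Finset.card_singleton]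
  have hcard : ∀ i ∈ Finset.univ.erase s,
      #(if i = s then {0}ᶜ else if i ∈ A ∧ s < i then Finset.univ else {0} : Finset R) =
        if i ∈ A ∧ s < i then Fintype.card R else 1 := fun i hi => by
    rw [if_neg (Finset.ne_of_mem_erase hi), apply_ite Finset.card, Finset.card_univ,
      Finset.card_singleton]
  have hfilter : {i ∈ Finset.univ.erase s | i ∈ A ∧ s < i} = {i ∈ A | s < i} := by
    ext i
    simp only [Finset.mem_filter, Finset.mem_erase, Finset.mem_univ, and_true]
    exact and_iff_right_of_imp fun h => h.2.ne'
  rw [Finset.prod_congr rfl hcard, ← Finset.prod_filter, Finset.prod_const, hfilter]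

end CoordSubspace

section CoordWeight

variable {F : Type*} [Field F] [Fintype F] {n : ℕ} {K : Type*} [Field K] (x : Fin n → K)

lemma totalWeight_vectorWeight (U : Submodule F (Fin n → F)) :
    totalWeight (vectorWeight x) U = ∑ s, #{v | v ∈ U ∧ IsPivot v s} *
      (x s / (Fintype.card F : K) ^ (n - 1 - (s : ℕ)) / (Fintype.card F - 1)) := by
  simp only [totalWeight, vectorWeight]
  rw [Finset.sum_comm' (t' := Finset.univ) (s' := fun s => {v | v ∈ U ∧ IsPivot v s}) (by simp)]
  simp only [Finset.sum_const, nsmul_eq_mul]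

variable [CharZero K]

lemma totalWeight_coordSubspace (A : Finset (Fin n)) :
    totalWeight (vectorWeight x) (coordSubspace F A) =
      ∑ s ∈ A, x s / (Fintype.card F : K) ^ ((n : ℤ) - ((s : ℕ) + 1) - #{t ∈ A | s < t}) := by
  have hq0 : (Fintype.card F : K) ≠ 0 := mod_cast Fintype.card_ne_zero
  have hq1 := card_sub_one_ne_zero (F := F) (K := K)
  rw [totalWeight_vectorWeight, ← Finset.sum_subset (Finset.subset_univ A)]
  · refine Finset.sum_congr rfl fun s hs => ?_
    have hexp : (n : ℤ) - ((s : ℕ) + 1) = (n - 1 - s : ℕ) := by omega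
    rw [card_filter_mem_coordSubspace_and_isPivot hs, hexp, zpow_sub₀ hq0, zpow_natCast,
      zpow_natCast, Nat.cast_mul, Nat.cast_pow, Nat.cast_pred Fintype.card_pos]
    field_simp
  · intro s _ hs
    have hempty : ∀ v : Fin n → F, ¬(v ∈ coordSubspace F A ∧ IsPivot v s) := fun v hv =>
      hv.2.1 (mem_coordSubspace.mp hv.1 s hs)
    simp [hempty]

lemma sum_vectorWeight : ∑ v : Fin n → F, vectorWeight x v = ∑ i, x i := by
  have h := totalWeight_coordSubspace (F := F) x Finset.univ
  simp only [coordSubspace_univ, totalWeight, mem_top, Finset.filter_true] at h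
  refine h.trans (Finset.sum_congr rfl fun s _ => ?_)
  have hexp : (n : ℤ) - ((s : ℕ) + 1) - #{t | s < t} = 0 := by
    rw [Finset.filter_lt_eq_Ioi, Fin.card_Ioi]
    omega
  rw [hexp, zpow_zero, div_one]

lemma totalWeight_coordSubspace_insert_sub {A : Finset (Fin n)} {p : Fin n} (hp : p ∉ A) :
    totalWeight (vectorWeight x) (coordSubspace F (insert p A)) -
        totalWeight (vectorWeight x) (coordSubspace F A) =
      ∑ s ∈ insert p A with s ≤ p,
        x s / (Fintype.card F : K) ^ ((n : ℤ) - ((s : ℕ) + 1) - #{t ∈ A | s < t}) *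
          (Fintype.card F - 1) ^ (if s < p then 1 else 0) := by
  have hq0 : (Fintype.card F : K) ≠ 0 := mod_cast Fintype.card_ne_zero
  have hcard : ∀ s, #{t ∈ insert p A | s < t} = #{t ∈ A | s < t} + if s < p then 1 else 0 := by
    intro s
    rw [Finset.filter_insert]
    split_ifs
    · exact Finset.card_insert_of_notMem (by simp [hp])
    · rfl
  simp only [totalWeight_coordSubspace, hcard, Finset.sum_filter]
  rw [Finset.sum_insert hp, Finset.sum_insert hp, add_sub_assoc, ← Finset.sum_sub_distrib]
  simp only [lt_irrefl, if_false, le_refl, if_true, add_zero, pow_zero, mul_one]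
  refine congr_arg _ (Finset.sum_congr rfl fun s hs => ?_)
  rcases lt_or_ge s p with hsp | hsp
  · rw [if_pos hsp, if_pos hsp.le, Nat.cast_add, Nat.cast_one, ← sub_sub, zpow_sub_one₀ hq0]
    field_simp
  · have hne : s ≠ p := fun h => hp (h ▸ hs)
    simp [hsp.not_gt, (hsp.lt_of_ne' hne).not_ge]

end CoordWeight

section LowerTriangular

variable {F : Type} [Field F] {n : ℕ} {l : GLn F n}

lemma lowerTri.diag_ne_zero (hl : lowerTri l.1) (i : Fin n) : l.1 i i ≠ 0 := by
  have hdet : l.1.det ≠ 0 := ((Matrix.isUnit_iff_isUnit_det _).mp l.isUnit).ne_zero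
  rw [Matrix.det_of_isLowerTriangular _ hl] at hdet
  exact Finset.prod_ne_zero_iff.mp hdet i (Finset.mem_univ i)

lemma IsPivot.mulVec (hl : lowerTri l.1) {v : Fin n → F} {s : Fin n} (hs : IsPivot v s) :
    IsPivot (l.1 *ᵥ v) s := by
  constructor
  · rw [Matrix.mulVec, dotProduct, Finset.sum_eq_single s _ (by simp)]
    · exact mul_ne_zero (hl.diag_ne_zero s) hs.1
    · intro j _ hj
      rcases hj.lt_or_gt with h | h
      · rw [hs.2 j h, mul_zero]
      · rw [hl s j h, zero_mul]
  · intro i hi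
    rw [Matrix.mulVec, dotProduct]
    refine Finset.sum_eq_zero fun j _ => ?_
    rcases le_or_gt j i with h | h
    · rw [hs.2 j (h.trans_lt hi), mul_zero]
    · rw [hl i j h, zero_mul]

variable [Fintype F] {K : Type*} [Field K] (x : Fin n → K)

lemma vectorWeight_mulVec (hl : lowerTri l.1) (v : Fin n → F) :
    vectorWeight x (l.1 *ᵥ v) = vectorWeight x v := by
  rcases eq_or_ne v 0 with rfl | hv
  · rw [Matrix.mulVec_zero]
  · obtain ⟨s, hs⟩ := exists_isPivot hv
    rw [vectorWeight_eq_of_isPivot x hs, vectorWeight_eq_of_isPivot x (hs.mulVec hl)]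

lemma totalWeight_colFlag_mul (hl : lowerTri l.1) (g : GLn F n) (k : ℕ) :
    totalWeight (vectorWeight x) (colFlag (l * g) k) =
      totalWeight (vectorWeight x) (colFlag g k) := by
  have hbij : Function.Bijective (l.1 *ᵥ ·) :=
    Finite.injective_iff_bijective.mp (Matrix.mulVec_injective_of_isUnit l.isUnit)
  simp only [totalWeight, Finset.sum_filter]
  rw [← hbij.sum_comp]
  simp only [mulVec_mem_colFlag_mul_apply, vectorWeight_mulVec x hl]

end LowerTriangular

section PermutationFlag

variable {F : Type} [Field F] [Fintype F] [DecidableEq F] {n : ℕ} (π : Equiv.Perm (Fin n))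

lemma colFlag_permGL_apply (m : ℕ) :
    colFlag (permGL F n π) m =
      coordSubspace F (({j | (j : ℕ) < m} : Finset (Fin n)).map π.toEmbedding) := by
  have hinv : (permGL F n π)⁻¹.1 = permMat F n π⁻¹ := rfl
  ext v
  rw [mem_colFlag_apply, mem_coordSubspace, hinv]
  refine π.forall_congr fun {i} => ?_
  simp [permMat, Matrix.mulVec, dotProduct, π.symm_apply_eq]

lemma totalWeight_colFlag_permGL {K : Type*} [Field K] [CharZero K] (x : Fin n → K) (k : Fin n) :
    totalWeight (vectorWeight x) (colFlag (permGL F n π) k) =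
      ∑ j with j < k, x (π j) /
        (Fintype.card F : K) ^ ((n : ℤ) - ((π j : ℕ) + 1) - bCount π k (π j)) := by
  simp only [colFlag_permGL_apply, totalWeight_coordSubspace, Finset.sum_map, Finset.filter_map,
    Finset.card_map, Finset.filter_filter]
  rfl

lemma totalWeight_colFlag_permGL_succ_sub (x : Fin n → ℝ) (k : Fin n) :
    totalWeight (vectorWeight x) (colFlag (permGL F n π) (k + 1)) -
        totalWeight (vectorWeight x) (colFlag (permGL F n π) k) =
      fGB n (Fintype.card F) x π k := by
  have hsucc : ({j | (j : ℕ) < k + 1} : Finset (Fin n)) =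
      insert k ({j | (j : ℕ) < k} : Finset (Fin n)) := by
    ext j
    simp only [Finset.mem_filter_univ, Finset.mem_insert, Fin.ext_iff]
    omega
  rw [colFlag_permGL_apply, colFlag_permGL_apply, hsucc, Finset.map_insert,
    totalWeight_coordSubspace_insert_sub _ (by simp), ← Finset.map_insert]
  simp only [← hsucc, Finset.filter_map, Finset.sum_map, Finset.card_map, Finset.filter_filter,
    Order.lt_add_one_iff]
  rfl

end PermutationFlag

section ProductFormula

variable {F : Type} [Field F] [Fintype F] [DecidableEq F] {n : ℕ} {x : Fin n → ℝ}

lemma totalWeight_flagEquiv_of_inDC {K : Type*} [Field K] (x : Fin n → K) {π : Equiv.Perm (Fin n)}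
    {C : Cosets F n} (hC : inDC F n π C) (k : ℕ) :
    totalWeight (vectorWeight x) (flagEquiv C k) =
      totalWeight (vectorWeight x) (colFlag (permGL F n π) k) := by
  obtain ⟨l, b, hl, hb, rfl⟩ := hC
  rw [QuotientGroup.mk_mul_of_mem _ hb, flagEquiv_mk, totalWeight_colFlag_mul x hl]

lemma exists_isStationary_TGB (hx : ∀ i, 0 < x i) (hx1 : ∑ i, x i = 1) :
    ∃ Ψ, IsStationary (TGB F n ℝ x) (∑ i, x i) Ψ := by
  have hn : 0 < n := Nat.pos_of_ne_zero (by rintro rfl; simp at hx1)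
  have hM := moveToFrontMatrix_mem_rowStochastic (R := F) (vectorWeight_nonneg (F := F) hx)
    ((sum_vectorWeight x).trans hx1)
  obtain ⟨Ψ, hΨ⟩ := exists_isStationary_of_mem_rowStochastic hM
  refine ⟨Ψ ∘ flagEquiv, ?_⟩
  rw [hx1, TGB_eq_submatrix_moveToFrontMatrix hn, isStationary_submatrix_iff]
  simpa [Function.comp_assoc]

lemma IsStationary.apply_eq_prod (hx : ∀ i, 0 < x i) (hx1 : ∑ i, x i = 1) {Ψ : Cosets F n → ℝ}
    (hΨ : IsStationary (TGB F n ℝ x) (∑ i, x i) Ψ) (C : Cosets F n) :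
    Ψ C = ∏ k ∈ Finset.range n,
      (totalWeight (vectorWeight x) (flagEquiv C (k + 1)) -
          totalWeight (vectorWeight x) (flagEquiv C k)) /
        (1 - totalWeight (vectorWeight x) (flagEquiv C k)) := by
  have hn : 0 < n := Nat.pos_of_ne_zero (by rintro rfl; simp at hx1)
  have hw : ∀ U : Submodule F (Fin n → F), U ≠ ⊤ → totalWeight (vectorWeight x) U ≠ 1 :=
    fun U hU => ((totalWeight_lt_sum (vectorWeight_nonneg hx) (fun _ => vectorWeight_pos hx)
      hU).trans_eq ((sum_vectorWeight x).trans hx1)).ne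
  rw [hx1, TGB_eq_submatrix_moveToFrontMatrix hn, isStationary_submatrix_iff] at hΨ
  simpa using apply_eq_prod_of_vecMul_eq_self hw (hΨ.2.2.trans (one_smul ℝ _)) hΨ.2.1 (flagEquiv C)

lemma IsStationary.apply_permGL (hx : ∀ i, 0 < x i) (hx1 : ∑ i, x i = 1) {Ψ : Cosets F n → ℝ}
    (hΨ : IsStationary (TGB F n ℝ x) (∑ i, x i) Ψ) (π : Equiv.Perm (Fin n)) :
    Ψ (permGL F n π) = psiGB n (Fintype.card F) x π := by
  rw [hΨ.apply_eq_prod hx hx1, psiGB, Finset.prod_range]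
  refine Finset.prod_congr rfl fun k _ => ?_
  rw [flagEquiv_mk, totalWeight_colFlag_permGL_succ_sub, totalWeight_colFlag_permGL]

end ProductFormula

/-- Let `q` be a prime power (here: the cardinality of the finite field
`F`) and `x` positive weights summing to `1`.  Then `T_{G/B}(q,x)` has a unique stationary
distribution `Ψ`; `Ψ` is constant on double cosets `[π]`; at the coset `F_π` of the
permutation matrix of `π` it is given by the product formula `psiGB`; and its entries sum
to `1`. -/
theorem qTsetlin_flags_stationary (F : Type) [Field F] [Fintype F] [DecidableEq F]
    (n : ℕ) (x : Fin n → ℝ) (hx : ∀ i, 0 < x i) (hx1 : ∑ i, x i = 1) :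
    (∃! Ψ : Cosets F n → ℝ, IsStationary (TGB F n ℝ x) (∑ i, x i) Ψ) ∧
    (∀ Ψ : Cosets F n → ℝ, IsStationary (TGB F n ℝ x) (∑ i, x i) Ψ →
      (∀ (π : Equiv.Perm (Fin n)) (C C' : Cosets F n),
        inDC F n π C → inDC F n π C' → Ψ C = Ψ C') ∧
      (∀ π : Equiv.Perm (Fin n),
        Ψ (QuotientGroup.mk (permGL F n π)) = psiGB n (Fintype.card F : ℝ) x π) ∧
      (∑ C : Cosets F n, Ψ C = 1)) := by
  obtain ⟨Ψ₀, hΨ₀⟩ := exists_isStationary_TGB (F := F) hx hx1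
  refine ⟨⟨Ψ₀, hΨ₀, fun Ψ hΨ => funext fun C => ?_⟩,
    fun Ψ hΨ => ⟨fun π C C' hC hC' => ?_, hΨ.apply_permGL hx hx1, hΨ.2.1⟩⟩
  · rw [hΨ.apply_eq_prod hx hx1, hΨ₀.apply_eq_prod hx hx1]
  · simp only [hΨ.apply_eq_prod hx hx1, totalWeight_flagEquiv_of_inDC x hC,
      totalWeight_flagEquiv_of_inDC x hC']

end QTsetlin
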